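/- arXiv:2407.20890 — 3 statements merged into one kernel-verified Lean document; each statement's English description precedes it below -/
import Mathlib

section
/- Let T : ℝ² → ℝ² be the linear operator T(x, y) = (2x, y/2), where ℝ² carries the Euclidean norm, and let 𝒮 = (S_n)_{n∈ℤ} be defined by S_n = T if n is odd and S_n = T⁻¹ if n is even. Then, for every 1 ≤ p < ∞, the shift operator σ_𝒮 : ℓ_p(ℝ²) → ℓ_p(ℝ²) does NOT have the shadowing property (even though each S_n, being hyperbolic, has the shadowing property). -/
/-!
The weights `2, 1/2, 2, 1/2, …` acting on the first coordinate have uniformly bounded partial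
products: with `g k = 1` for even `k` and `g k = 2` for odd `k`, the substitution
`b k = g k * (u k) 0` turns the action of `σ` on first coordinates into the unweighted backward
shift on `ℓ_p(ℤ)`, an invertible isometry. Such an operator cannot shadow. Take the perturbation
`z m` to be the first unit vector placed at position `-m - 1`, so that the pulses move along with
the shift. If `x (m + 1) - σ (x m) = z m`, then following the orbit at position `-m`, the scalar
`f m = g (-m) * (x m (-m)) 0` satisfies `f (m + 1) = f m + g (-m - 1) ≥ f m + 1`. Hence `f` is
unbounded, although `|f m| ≤ 2 ‖x m‖`. No quantitative bound on `x` is needed: bounded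
perturbations with no bounded solution exist.
-/

open scoped ENNReal

namespace ShiftOperators

variable {𝕂 : Type*} [RCLike 𝕂] {X : Type*} [NormedAddCommGroup X] [NormedSpace 𝕂 X]

/-- `backComp S n x = (S_{[1,n]})⁻¹ x = Sₙ⁻¹ (⋯ (S₁⁻¹ x))`, with the convention
`S_{[1,0]} = Id` (empty composition). -/
def backComp (S : ℤ → X ≃L[𝕂] X) : ℕ → X → X
  | 0, x => x
  | n + 1, x => (S ((n : ℤ) + 1)).symm (backComp S n x)

/-- `fwdComp S n x = S_{[-n+1,0]} x = S_{-n+1} (⋯ (S₀ x))`, with the convention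
`fwdComp S 0 x = x` (empty composition). -/
def fwdComp (S : ℤ → X ≃L[𝕂] X) : ℕ → X → X
  | 0, x => x
  | n + 1, x => S (-(n : ℤ)) (fwdComp S n x)

/-- The unit vectors `e_n(x)` associated to a sequence of operators `S` and a vector `x`:
`e_n(x) = (S_{[1,n]})⁻¹ x / ‖(S_{[1,n]})⁻¹ x‖` for `n ≥ 0` and
`e_n(x) = S_{[n+1,0]} x / ‖S_{[n+1,0]} x‖` for `n < 0`. -/
noncomputable def eVec (S : ℤ → X ≃L[𝕂] X) (x : X) (n : ℤ) : X :=
  if 0 ≤ n then ((‖backComp S n.toNat x‖ : ℝ) : 𝕂)⁻¹ • backComp S n.toNat x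
  else ((‖fwdComp S (-n).toNat x‖ : ℝ) : 𝕂)⁻¹ • fwdComp S (-n).toNat x

/-- The weights `ω_n(x)`: `ω_n(x) = ‖(S_{[1,n-1]})⁻¹ x‖ / ‖(S_{[1,n]})⁻¹ x‖` for `n > 0`
and `ω_n(x) = ‖S_{[n,0]} x‖ / ‖S_{[n+1,0]} x‖` for `n ≤ 0`. -/
noncomputable def wt (S : ℤ → X ≃L[𝕂] X) (x : X) (n : ℤ) : ℝ :=
  if 0 < n then ‖backComp S (n - 1).toNat x‖ / ‖backComp S n.toNat x‖
  else ‖fwdComp S (1 - n).toNat x‖ / ‖fwdComp S (-n).toNat x‖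

/-- `sup_{n ∈ ℤ} max {‖Sₙ‖, ‖Sₙ⁻¹‖} < ∞`. -/
def UnifBounded (S : ℤ → X ≃L[𝕂] X) : Prop :=
  ∃ C : ℝ, ∀ n : ℤ, ‖(S n : X →L[𝕂] X)‖ ≤ C ∧ ‖((S n).symm : X →L[𝕂] X)‖ ≤ C

/-- A map is topologically transitive. -/
def TopolTransitive {Y : Type*} [TopologicalSpace Y] (T : Y → Y) : Prop :=
  ∀ U V : Set Y, IsOpen U → IsOpen V → U.Nonempty → V.Nonempty →
    ∃ n : ℕ, (T^[n] '' U ∩ V).Nonempty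

/-- A map is (topologically) mixing. -/
def TopolMixing {Y : Type*} [TopologicalSpace Y] (T : Y → Y) : Prop :=
  ∀ U V : Set Y, IsOpen U → IsOpen V → U.Nonempty → V.Nonempty →
    ∃ N : ℕ, ∀ n ≥ N, (T^[n] '' U ∩ V).Nonempty

/-- A map has the (linear) shadowing property with constant `K`: every bounded sequence
`(z_n)` admits a bounded sequence `(x_n)` with `x_{n+1} - T x_n = z_n` and
`sup ‖x_n‖ ≤ K sup ‖z_n‖`. -/
def ShadowingWith {Y : Type*} [NormedAddCommGroup Y] (T : Y → Y) (K : ℝ) : Prop :=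
  ∀ z : ℤ → Y, BddAbove (Set.range fun n => ‖z n‖) →
    ∃ x : ℤ → Y, BddAbove (Set.range fun n => ‖x n‖) ∧
      (∀ n : ℤ, x (n + 1) - T (x n) = z n) ∧
      (⨆ n : ℤ, ‖x n‖) ≤ K * ⨆ n : ℤ, ‖z n‖

/-- A map has the (linear) shadowing property. -/
def Shadowing {Y : Type*} [NormedAddCommGroup Y] (T : Y → Y) : Prop :=
  ∃ K > 0, ShadowingWith T K

/-- A bounded invertible operator is generalized hyperbolic: `Y = M ⊕ N` for closed
subspaces with `T M ⊆ M`, `T⁻¹ N ⊆ N`, `T` uniformly contracting on `M` and `T⁻¹`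
uniformly contracting on `N`. -/
def GeneralizedHyperbolic {Y : Type*} [NormedAddCommGroup Y] [NormedSpace 𝕂 Y]
    (T : Y ≃L[𝕂] Y) : Prop :=
  ∃ M N : Submodule 𝕂 Y, IsClosed (M : Set Y) ∧ IsClosed (N : Set Y) ∧ IsCompl M N ∧
    (∀ u ∈ M, T u ∈ M) ∧ (∀ v ∈ N, T.symm v ∈ N) ∧
    ∃ C > 0, ∃ lam : ℝ, 0 < lam ∧ lam < 1 ∧
      (∀ u ∈ M, ∀ n : ℕ, ‖(⇑T)^[n] u‖ ≤ C * lam ^ n * ‖u‖) ∧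
      (∀ v ∈ N, ∀ n : ℕ, ‖(⇑T.symm)^[n] v‖ ≤ C * lam ^ n * ‖v‖)

end ShiftOperators

open ShiftOperators

/-- The weight conjugating the first coordinate of the alternating shift to the unweighted
shift: `1` at even positions and `2` at odd ones. -/
noncomputable def alternatingGauge (k : ℤ) : ℝ := if Even k then 1 else 2

lemma one_le_alternatingGauge (k : ℤ) : 1 ≤ alternatingGauge k := by
  unfold alternatingGauge; split_ifs <;> norm_num

lemma alternatingGauge_le_two (k : ℤ) : alternatingGauge k ≤ 2 := by
  unfold alternatingGauge; split_ifs <;> norm_num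

/-- The gauge absorbs the weight of `S k` on the first coordinate. -/
lemma alternatingGauge_sub_one_mul
    (S : ℤ → (EuclideanSpace ℝ (Fin 2) ≃L[ℝ] EuclideanSpace ℝ (Fin 2)))
    (hSodd : ∀ n : ℤ, Odd n → ∀ v : EuclideanSpace ℝ (Fin 2),
      S n v 0 = 2 * v 0 ∧ S n v 1 = v 1 / 2)
    (hSeven : ∀ n : ℤ, Even n → ∀ v : EuclideanSpace ℝ (Fin 2),
      S n v 0 = v 0 / 2 ∧ S n v 1 = 2 * v 1)
    (k : ℤ) (v : EuclideanSpace ℝ (Fin 2)) :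
    alternatingGauge (k - 1) * S k v 0 = alternatingGauge k * v 0 := by
  unfold alternatingGauge
  rcases Int.even_or_odd k with hk | hk
  · have h1 : ¬ Even (k - 1) := by grind
    rw [if_neg h1, if_pos hk, (hSeven k hk v).1]
    ring
  · have h1 : Even (k - 1) := by grind
    have h2 : ¬ Even k := by grind
    rw [if_pos h1, if_neg h2, (hSodd k hk v).1]
    ring

/-- **Operators without shadowing.** Let `T(x, y) = (2x, y/2)` on `ℝ²` (Euclidean norm)
and `Sₙ = T` for odd `n`, `Sₙ = T⁻¹` for even `n`.  Then the associated shift operator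
`σ_𝒮 : ℓ_p(ℝ²) → ℓ_p(ℝ²)` does not have the shadowing property. -/
theorem shift_operator_of_alternating_hyperbolic_not_shadowing
    (S : ℤ → (EuclideanSpace ℝ (Fin 2) ≃L[ℝ] EuclideanSpace ℝ (Fin 2)))
    (hSodd : ∀ n : ℤ, Odd n → ∀ v : EuclideanSpace ℝ (Fin 2),
      S n v 0 = 2 * v 0 ∧ S n v 1 = v 1 / 2)
    (hSeven : ∀ n : ℤ, Even n → ∀ v : EuclideanSpace ℝ (Fin 2),
      S n v 0 = v 0 / 2 ∧ S n v 1 = 2 * v 1)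
    (p : ℝ≥0∞) [Fact (1 ≤ p)] (hp : p ≠ ∞)
    (σ : lp (fun _ : ℤ => EuclideanSpace ℝ (Fin 2)) p ≃L[ℝ]
         lp (fun _ : ℤ => EuclideanSpace ℝ (Fin 2)) p)
    (hσ : ∀ (u : lp (fun _ : ℤ => EuclideanSpace ℝ (Fin 2)) p) (n : ℤ),
      σ u n = S (n + 1) (u (n + 1))) :
    ¬ Shadowing ⇑σ := by
  rintro ⟨K, -, hK⟩
  have hp0 : p ≠ 0 := (zero_lt_one.trans_le (Fact.out : (1 : ℝ≥0∞) ≤ p)).ne'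
  set e : EuclideanSpace ℝ (Fin 2) := EuclideanSpace.single 0 1 with he
  obtain ⟨x, ⟨C, hC⟩, hx, -⟩ := hK
    (fun m => lp.single (E := fun _ : ℤ => EuclideanSpace ℝ (Fin 2)) p (-m - 1) e) (by
      refine ⟨‖e‖, ?_⟩
      rintro _ ⟨m, rfl⟩
      exact (lp.norm_single (zero_lt_one.trans_le Fact.out) _ _).le)
  set f : ℤ → ℝ := fun m => alternatingGauge (-m) * (x m (-m)) 0 with hf
  have hstep : ∀ m : ℤ, f (m + 1) = f m + alternatingGauge (-m - 1) := by
    intro m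
    have h1 := congrArg (fun u : lp (fun _ : ℤ => EuclideanSpace ℝ (Fin 2)) p =>
      (u (-m - 1)) 0) (hx m)
    simp only [lp.coeFn_sub, Pi.sub_apply, hσ, PiLp.sub_apply, lp.single_apply_self,
      sub_add_cancel] at h1
    have h2 : e 0 = 1 := by simp [he]
    have h3 := alternatingGauge_sub_one_mul S hSodd hSeven (-m) (x m (-m))
    have h4 : -(m + 1) = -m - 1 := by ring
    simp only [hf, h4]
    rw [← h3]
    linear_combination alternatingGauge (-m - 1) * (h1.trans h2)
  have hgrow : ∀ n : ℕ, f 0 + n ≤ f n := by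
    intro n
    induction n with
    | zero => simp
    | succ n ih =>
      have := hstep n
      have := one_le_alternatingGauge (-(n : ℤ) - 1)
      push_cast
      linarith
  have hbound : ∀ m : ℤ, |f m| ≤ 2 * C := by
    intro m
    have h1 : ‖(x m (-m)) 0‖ ≤ C :=
      (PiLp.norm_apply_le _ _).trans ((lp.norm_apply_le_norm hp0 _ _).trans (hC ⟨m, rfl⟩))
    have h2 := one_le_alternatingGauge (-m)
    rw [Real.norm_eq_abs] at h1
    simp only [hf]
    rw [abs_mul, abs_of_nonneg (by linarith)]
    exact mul_le_mul (alternatingGauge_le_two _) h1 (abs_nonneg _) (by norm_num)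
  obtain ⟨n, hn⟩ := exists_nat_gt (4 * C)
  have h1 := hgrow n
  have h2 := abs_le.mp (hbound n)
  have h3 := abs_le.mp (hbound 0)
  linarith
end

section
/- Let X be a Banach space over 𝕂 of finite dimension d ≥ 1 and let 𝒮 = (S_n)_{n∈ℤ} be a sequence of invertible bounded linear operators on X with sup_{n∈ℤ} max{‖S_n‖, ‖S_n⁻¹‖} < ∞ which is jointly diagonalizable: there is a bounded invertible linear operator L on X and a basis {v_1, …, v_d} of X such that for every n ∈ ℤ there is an operator D_n diagonal with respect to {v_1, …, v_d} (i.e., D_n(v_i) = λ_n(i) v_i for scalars λ_n(i) ≠ 0) with S_n = L ∘ D_n ∘ L⁻¹. Then, for every 1 ≤ p < ∞, the shift operator σ_𝒮 : ℓ_p(X) → ℓ_p(X) is conjugate (by a bounded invertible linear operator) to a product of d weighted backward shifts, each defined on ℓ_p(𝕂). -/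
/-!
The vectors `b i = L (v i)` form a basis of `X` of common eigenvectors: `S n (b i) = lam n i • b i`.
Taking coordinates with respect to `b` in each entry of a sequence identifies `ℓ_p(X)` with
`ℓ_p(𝕂)^d`, and the identification `H` is a topological isomorphism because, `X` being
finite-dimensional, the coordinate functionals and the maps `a ↦ a • b i` are bounded
(`exists_coordinate_equiv`). In these coordinates `S n` multiplies the `i`-th coordinate by
`lam n i`, so `H ∘ σ ∘ H⁻¹` is the product of the weighted backward shifts with weights
`ω i n = lam n i`. The weights are bounded above and away from zero since an eigenvalue is bounded
by the norm of the operator, applied to both `S n` and `(S n)⁻¹`.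
-/

open scoped ENNReal

open ShiftOperators

section

variable {𝕂 : Type*} [RCLike 𝕂] {X : Type*} [NormedAddCommGroup X] [NormedSpace 𝕂 X]

/-- Taking coordinates entrywise is a topological isomorphism `ℓ_p(X) ≃ ℓ_p(𝕂)^d`. -/
theorem exists_coordinate_equiv {d : ℕ} (b : Module.Basis (Fin d) 𝕂 X)
    (p : ℝ≥0∞) [Fact (1 ≤ p)] :
    ∃ H : lp (fun _ : ℤ => X) p ≃L[𝕂] PiLp 1 (fun _ : Fin d => lp (fun _ : ℤ => 𝕂) p),
      ∀ (u : lp (fun _ : ℤ => X) p) (i : Fin d) (n : ℤ), H u i n = b.repr (u n) i := by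
  have : FiniteDimensional 𝕂 X := b.finiteDimensional_of_finite
  let c : Fin d → (X →L[𝕂] 𝕂) := fun i => (b.coord i).toContinuousLinearMap
  let e : Fin d → (𝕂 →L[𝕂] X) := fun i => ContinuousLinearMap.toSpanSingleton 𝕂 (b i)
  let C : Fin d → (lp (fun _ : ℤ => X) p →L[𝕂] lp (fun _ : ℤ => 𝕂) p) := fun i =>
    lp.mapCLM p (fun _ => c i) (norm_nonneg (c i)) (fun _ => le_rfl)
  let E : Fin d → (lp (fun _ : ℤ => 𝕂) p →L[𝕂] lp (fun _ : ℤ => X) p) := fun i =>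
    lp.mapCLM p (fun _ => e i) (norm_nonneg (e i)) (fun _ => le_rfl)
  have hE : ∀ i w n, E i w n = w n • b i := fun i w n => rfl
  let F : lp (fun _ : ℤ => X) p →L[𝕂] PiLp 1 (fun _ : Fin d => lp (fun _ : ℤ => 𝕂) p) :=
    (PiLp.continuousLinearEquiv 1 𝕂
      (fun _ : Fin d => lp (fun _ : ℤ => 𝕂) p)).symm.toContinuousLinearMap.comp
      (ContinuousLinearMap.pi C)
  let G : PiLp 1 (fun _ : Fin d => lp (fun _ : ℤ => 𝕂) p) →L[𝕂] lp (fun _ : ℤ => X) p :=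
    ∑ i, (E i).comp (PiLp.proj 1 (𝕜 := 𝕂) (fun _ : Fin d => lp (fun _ : ℤ => 𝕂) p) i)
  have hF : ∀ u i n, F u i n = b.repr (u n) i := fun u i n => rfl
  have hG : ∀ w n, G w n = ∑ i, w i n • b i := by
    intro w n
    have h : G w = ∑ i, E i (w i) := by simp [G]
    rw [h, lp.coeFn_sum, Finset.sum_apply]
    exact Finset.sum_congr rfl fun i _ => hE i (w i) n
  refine ⟨ContinuousLinearEquiv.equivOfInverse F G (fun u => ?_) (fun w => ?_), hF⟩
  · refine lp.ext (funext fun n => ?_)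
    rw [hG]
    simp_rw [hF]
    exact b.sum_repr (u n)
  · refine PiLp.ext fun i => lp.ext (funext fun n => ?_)
    rw [hF, hG, b.repr_sum_self]

/-- An eigenvalue of a bounded operator is bounded in modulus by the operator norm. -/
theorem norm_eigenvalue_le {T : X →L[𝕂] X} {C : ℝ} (hT : ‖T‖ ≤ C) {x : X} (hx : x ≠ 0) {a : 𝕂}
    (h : T x = a • x) : ‖a‖ ≤ C := by
  have h1 := T.le_of_opNorm_le hT x
  rw [h, norm_smul] at h1
  exact le_of_mul_le_mul_right h1 (norm_pos_iff.2 hx)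

end

/-- **Jointly diagonalizable operators.** If the uniformly bounded sequence
`𝒮 = (Sₙ)` of invertible operators on a `d`-dimensional Banach space `X` is jointly
diagonalizable, i.e. `Sₙ = L ∘ Dₙ ∘ L⁻¹` with `Dₙ` diagonal with respect to a fixed
basis `{v 1, …, v d}` (equivalently `Sₙ (L (v i)) = λₙ(i) • L (v i)`), then the shift
operator `σ_𝒮 : ℓ_p(X) → ℓ_p(X)` is conjugate to a product of `d` weighted backward
shifts, each defined on `ℓ_p(𝕂)`. -/
theorem shift_operator_of_jointly_diagonalizable_conjugate_to_product
    {𝕂 : Type*} [RCLike 𝕂] {X : Type*} [NormedAddCommGroup X] [NormedSpace 𝕂 X]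
    [CompleteSpace X] {d : ℕ} (hd : 1 ≤ d)
    (S : ℤ → X ≃L[𝕂] X) (hS : UnifBounded S)
    (L : X ≃L[𝕂] X) (v : Fin d → X)
    (hvli : LinearIndependent 𝕂 v) (hvsp : Submodule.span 𝕂 (Set.range v) = ⊤)
    (lam : ℤ → Fin d → 𝕂) (hlam : ∀ n i, lam n i ≠ 0)
    (hdiag : ∀ (n : ℤ) (i : Fin d), S n (L (v i)) = lam n i • L (v i))
    (p : ℝ≥0∞) [Fact (1 ≤ p)] (hp : p ≠ ∞)
    (σ : lp (fun _ : ℤ => X) p ≃L[𝕂] lp (fun _ : ℤ => X) p)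
    (hσ : ∀ (u : lp (fun _ : ℤ => X) p) (n : ℤ), σ u n = S (n + 1) (u (n + 1))) :
    ∃ ω : Fin d → ℤ → 𝕂,
      (∀ i, ∃ c C : ℝ, 0 < c ∧ ∀ n : ℤ, c ≤ ‖ω i n‖ ∧ ‖ω i n‖ ≤ C) ∧
      ∃ P : PiLp 1 (fun _ : Fin d => lp (fun _ : ℤ => 𝕂) p) ≃L[𝕂]
            PiLp 1 (fun _ : Fin d => lp (fun _ : ℤ => 𝕂) p),
        (∀ (u : PiLp 1 (fun _ : Fin d => lp (fun _ : ℤ => 𝕂) p)) (i : Fin d) (n : ℤ),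
          P u i n = ω i (n + 1) * u i (n + 1)) ∧
        ∃ H : lp (fun _ : ℤ => X) p ≃L[𝕂] PiLp 1 (fun _ : Fin d => lp (fun _ : ℤ => 𝕂) p),
          ∀ u : lp (fun _ : ℤ => X) p, H (σ u) = P (H u) := by
  have hspan : ⊤ ≤ Submodule.span 𝕂 (Set.range v) := hvsp.ge
  let b : Module.Basis (Fin d) 𝕂 X := (Module.Basis.mk hvli hspan).map L.toLinearEquiv
  have hb : ∀ i, b i = L (v i) := fun i => by simp [b]
  have hSb : ∀ n i, S n (b i) = lam n i • b i := fun n i => by rw [hb, hdiag]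
  have hrepr : ∀ n x i, b.repr (S n x) i = lam n i * b.repr x i := by
    intro n x i
    have h : S n x = ∑ j, (lam n j * b.repr x j) • b j := by
      conv_lhs => rw [← b.sum_repr x]
      rw [map_sum]
      refine Finset.sum_congr rfl fun j _ => ?_
      rw [map_smul, hSb, smul_smul, mul_comm]
    rw [h, b.repr_sum_self]
  obtain ⟨H, hH⟩ := exists_coordinate_equiv b p
  obtain ⟨C, hC⟩ := hS
  refine ⟨fun i n => lam n i, fun i => ?_, (H.symm.trans σ).trans H, fun u i n => ?_, H,
    fun u => by simp⟩
  · have hinv : ∀ n, ‖lam n i‖⁻¹ ≤ C := fun n => by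
      rw [← norm_inv]
      refine norm_eigenvalue_le (hC n).2 (b.ne_zero i) ?_
      refine (S n).symm_apply_eq.2 ?_
      rw [map_smul, hSb, smul_smul, inv_mul_cancel₀ (hlam n i), one_smul]
    have hpos : ∀ n, 0 < ‖lam n i‖ := fun n => norm_pos_iff.2 (hlam n i)
    have hC0 : 0 < C := (inv_pos.2 (hpos 0)).trans_le (hinv 0)
    exact ⟨C⁻¹, C, inv_pos.2 hC0, fun n => ⟨inv_le_of_inv_le₀ (hpos n) (hinv n),
      norm_eigenvalue_le (hC n).1 (b.ne_zero i) (hSb n i)⟩⟩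
  · change H (σ (H.symm u)) i n = _
    rw [hH, hσ, hrepr, ← hH, H.apply_symm_apply]
end

section
/- Let X = ℝ² with the norm ‖(x, y)‖ = max{|x|, |y|}, and let 𝒮 = (S_n)_{n∈ℤ} with S_n = L for all n, where L(x, y) = (x + y, y) (the matrix [[1,1],[0,1]]). Fix 1 ≤ p < ∞ and let σ_𝒮 : ℓ_p(ℝ²) → ℓ_p(ℝ²) be the associated shift operator. Then: (i) for every (x_n, y_n)_{n∈ℤ} ∈ ℓ_p(ℝ²) and every k ∈ ℤ, σ_𝒮^k((x_n, y_n)_{n∈ℤ}) = (x_{n+k} + k·y_{n+k}, y_{n+k})_{n∈ℤ}; (ii) consequently, if v = (x_n, y_n)_{n∈ℤ} ∈ ℓ_p(ℝ²) satisfies y_{n₀} ≠ 0 for some n₀, then ‖σ_𝒮^k(v)‖_p → ∞ as k → ∞; (iii) hence σ_𝒮 is not conjugate, by any bounded invertible linear operator, to the product B_𝟙 × B_𝟙 : ℓ_p(ℝ) × ℓ_p(ℝ) → ℓ_p(ℝ) × ℓ_p(ℝ), where 𝟙 is the constant weight sequence equal to 1 (an operator all of whose orbits are bounded). -/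
/-!
Since `L ^ k (x, y) = (x + k y, y)`, the iterates of the shift operator grow linearly: the
coordinate of `σ ^ k v` at `n₀ - k` is `(x_{n₀} + k y_{n₀}, y_{n₀})`, whose norm tends to infinity
as soon as `y_{n₀} ≠ 0`, and each coordinate is bounded by the `ℓ_p` norm. On the other hand
the unweighted shift `B` is an isometry of `ℓ_p` (`norm_shift_eq`), hence so is `B × B`. A
conjugacy `H` would give `‖σ ^ k v‖ ≤ ‖H⁻¹‖ ‖H v‖` for all `k ≥ 0`, which fails for `v = e₀ ⊗ (0, 1)`.
-/

open scoped ENNReal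

open ShiftOperators

/-- The unweighted backward shift is isometric on `ℓ_p`, `p < ∞`, by reindexing the defining sum. -/
theorem norm_shift_eq (p : ℝ≥0∞) [Fact (1 ≤ p)] (hp : p ≠ ∞)
    (a b : lp (fun _ : ℤ => ℝ) p) (h : ∀ n : ℤ, b n = a (n + 1)) : ‖b‖ = ‖a‖ := by
  have hp0 : 0 < p.toReal :=
    ENNReal.toReal_pos (zero_lt_one.trans_le Fact.out).ne' hp
  rw [lp.norm_eq_tsum_rpow hp0, lp.norm_eq_tsum_rpow hp0]
  congr 1
  simp_rw [h]
  exact (Equiv.addRight (1 : ℤ)).tsum_eq (fun n => ‖a n‖ ^ p.toReal)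

/-- Iterates of the shift operator with constant symbol `L`, where `L ^ k (x, y) = (x + k y, y)`. -/
theorem shift_zpow_apply
    (L : (ℝ × ℝ) ≃L[ℝ] (ℝ × ℝ)) (hL : ∀ w : ℝ × ℝ, L w = (w.1 + w.2, w.2))
    (p : ℝ≥0∞) [Fact (1 ≤ p)]
    (σ : lp (fun _ : ℤ => ℝ × ℝ) p ≃L[ℝ] lp (fun _ : ℤ => ℝ × ℝ) p)
    (hσ : ∀ (u : lp (fun _ : ℤ => ℝ × ℝ) p) (n : ℤ), σ u n = L (u (n + 1)))
    (u : lp (fun _ : ℤ => ℝ × ℝ) p) (k n : ℤ) :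
    (σ ^ k) u n = ((u (n + k)).1 + (k : ℝ) * (u (n + k)).2, (u (n + k)).2) := by
  induction k using Int.induction_on generalizing u n with
  | zero =>
    have h0 : (σ ^ (0 : ℤ)) u = u := rfl
    rw [h0]; simp
  | succ i ih =>
    have h1 : (σ ^ ((i : ℤ) + 1)) u = (σ ^ (i : ℤ)) (σ u) := by
      rw [zpow_add_one]; rfl
    rw [h1, ih, hσ, hL, add_assoc n]
    ext
    · push_cast; ring
    · rfl
  | pred i ih =>
    -- Writing `u = σ w` reduces the backward step to the formula for `w`.
    obtain ⟨w, rfl⟩ := σ.surjective u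
    have h1 : (σ ^ (-(i : ℤ) - 1)) (σ w) = (σ ^ (-(i : ℤ))) w := by
      have h2 : (σ ^ (-(i : ℤ))) = σ ^ (-(i : ℤ) - 1) * σ := by
        rw [← zpow_add_one, sub_add_cancel]
      rw [h2]; rfl
    have h3 : n + (-(i : ℤ) - 1) + 1 = n + -(i : ℤ) := by ring
    rw [h1, ih, hσ, hL, h3]
    ext
    · push_cast; ring
    · rfl

/-- Orbits of vectors with a nonzero second coordinate escape to infinity. -/
theorem tendsto_norm_shift_zpow
    (p : ℝ≥0∞) [Fact (1 ≤ p)]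
    (σ : lp (fun _ : ℤ => ℝ × ℝ) p ≃L[ℝ] lp (fun _ : ℤ => ℝ × ℝ) p)
    (hσ : ∀ (u : lp (fun _ : ℤ => ℝ × ℝ) p) (k n : ℤ),
      (σ ^ k) u n = ((u (n + k)).1 + (k : ℝ) * (u (n + k)).2, (u (n + k)).2))
    (u : lp (fun _ : ℤ => ℝ × ℝ) p) (n₀ : ℤ) (hn : (u n₀).2 ≠ 0) :
    Filter.Tendsto (fun k : ℕ => ‖(σ ^ (k : ℤ)) u‖) Filter.atTop Filter.atTop := by
  have hp0 : p ≠ 0 := (zero_lt_one.trans_le (Fact.out : 1 ≤ p)).ne'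
  have hlow : ∀ k : ℕ, (k : ℝ) * |(u n₀).2| - |(u n₀).1| ≤ ‖(σ ^ (k : ℤ)) u‖ := by
    intro k
    have h1 := lp.norm_apply_le_norm hp0 ((σ ^ (k : ℤ)) u) (n₀ - k)
    rw [hσ, sub_add_cancel] at h1
    have h2 := (norm_fst_le _).trans h1
    have h3 := abs_sub_abs_le_abs_sub ((k : ℝ) * (u n₀).2) (-(u n₀).1)
    rw [abs_mul, Nat.abs_cast, abs_neg, sub_neg_eq_add, add_comm _ (u n₀).1] at h3
    simp only [Int.cast_natCast, Real.norm_eq_abs] at h2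
    exact h3.trans h2
  refine Filter.tendsto_atTop_mono hlow ?_
  exact Filter.tendsto_atTop_add_const_right _ _
    (tendsto_natCast_atTop_atTop.atTop_mul_const (abs_pos.mpr hn))

/-- **A shift operator not conjugate to the expected product of weighted shifts.**
Let `X = ℝ²` with the max norm and `Sₙ = L` for all `n`, where `L(x,y) = (x + y, y)`.
Then: (i) the iterates of the shift operator `σ_𝒮` are given by
`σ_𝒮^k((xₙ,yₙ)ₙ) = (x_{n+k} + k y_{n+k}, y_{n+k})ₙ`; (ii) any `v ∈ ℓ_p(ℝ²)` with some
nonzero second coordinate has unbounded forward orbit; (iii) hence `σ_𝒮` is not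
conjugate to the product `B_𝟙 × B_𝟙` of the two weight-one backward shifts on
`ℓ_p(ℝ) × ℓ_p(ℝ)`. -/
theorem shift_operator_jordan_block_not_conjugate_to_product
    (L : (ℝ × ℝ) ≃L[ℝ] (ℝ × ℝ)) (hL : ∀ w : ℝ × ℝ, L w = (w.1 + w.2, w.2))
    (p : ℝ≥0∞) [Fact (1 ≤ p)] (hp : p ≠ ∞)
    (σ : lp (fun _ : ℤ => ℝ × ℝ) p ≃L[ℝ] lp (fun _ : ℤ => ℝ × ℝ) p)
    (hσ : ∀ (u : lp (fun _ : ℤ => ℝ × ℝ) p) (n : ℤ), σ u n = L (u (n + 1)))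
    (B : lp (fun _ : ℤ => ℝ) p ≃L[ℝ] lp (fun _ : ℤ => ℝ) p)
    (hB : ∀ (a : lp (fun _ : ℤ => ℝ) p) (n : ℤ), B a n = a (n + 1))
    (P : (lp (fun _ : ℤ => ℝ) p × lp (fun _ : ℤ => ℝ) p) ≃L[ℝ]
         (lp (fun _ : ℤ => ℝ) p × lp (fun _ : ℤ => ℝ) p))
    (hP : ∀ w : lp (fun _ : ℤ => ℝ) p × lp (fun _ : ℤ => ℝ) p, P w = (B w.1, B w.2)) :
    (∀ (u : lp (fun _ : ℤ => ℝ × ℝ) p) (k n : ℤ),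
      (σ ^ k) u n = ((u (n + k)).1 + (k : ℝ) * (u (n + k)).2, (u (n + k)).2)) ∧
    (∀ u : lp (fun _ : ℤ => ℝ × ℝ) p, (∃ n₀ : ℤ, (u n₀).2 ≠ 0) →
      Filter.Tendsto (fun k : ℕ => ‖(σ ^ (k : ℤ)) u‖) Filter.atTop Filter.atTop) ∧
    ¬ ∃ H : lp (fun _ : ℤ => ℝ × ℝ) p ≃L[ℝ]
          (lp (fun _ : ℤ => ℝ) p × lp (fun _ : ℤ => ℝ) p),
        ∀ u : lp (fun _ : ℤ => ℝ × ℝ) p, H (σ u) = P (H u) := by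
  have hiter := shift_zpow_apply L hL p σ hσ
  refine ⟨hiter, fun u ⟨n₀, hn⟩ => tendsto_norm_shift_zpow p σ hiter u n₀ hn, ?_⟩
  rintro ⟨H, hH⟩
  have hPn : ∀ w, ‖P w‖ = ‖w‖ := fun w => by
    rw [hP, Prod.norm_def, Prod.norm_def, norm_shift_eq p hp w.1 _ (hB w.1),
      norm_shift_eq p hp w.2 _ (hB w.2)]
  have hnorm : ∀ (k : ℕ) (u : lp (fun _ : ℤ => ℝ × ℝ) p), ‖H ((σ ^ (k : ℤ)) u)‖ = ‖H u‖ := by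
    intro k
    induction k with
    | zero => exact fun u => rfl
    | succ k ih =>
      intro u
      have h1 : (σ ^ ((k + 1 : ℕ) : ℤ)) u = (σ ^ (k : ℤ)) (σ u) := by
        rw [Nat.cast_succ, zpow_add_one]; rfl
      rw [h1, ih, hH, hPn]
  let v : lp (fun _ : ℤ => ℝ × ℝ) p := lp.single p 0 ((0, 1) : ℝ × ℝ)
  have hv : (v 0).2 ≠ 0 := by simp [v]
  obtain ⟨k, hk⟩ := ((tendsto_norm_shift_zpow p σ hiter v 0 hv).eventually_gt_atTop
    (‖(H.symm :
      (lp (fun _ : ℤ => ℝ) p × lp (fun _ : ℤ => ℝ) p) →L[ℝ] lp (fun _ : ℤ => ℝ × ℝ) p)‖ * ‖H v‖)).exists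
  have hle := (H.symm :
    (lp (fun _ : ℤ => ℝ) p × lp (fun _ : ℤ => ℝ) p) →L[ℝ] lp (fun _ : ℤ => ℝ × ℝ) p).le_opNorm
      (H ((σ ^ (k : ℤ)) v))
  rw [hnorm, ContinuousLinearEquiv.coe_coe, H.symm_apply_apply] at hle
  exact absurd hk hle.not_gt
end
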